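/- There are exactly two canonical matrices in Λ_4^2, namely the matrices whose rows, read as 4-digit binary numbers, are the tuples ⟨3, 3, 12, 12⟩ and ⟨3, 5, 10, 12⟩. -/

import Mathlib

/-- `Lambda n k` : the set of `n×n` binary matrices with exactly `k` ones
in each row and each column. -/
def Lambda (n k : ℕ) : Set (Matrix (Fin n) (Fin n) Bool) :=
  {A | (∀ i, (Finset.univ.filter fun j => A i j = true).card = k) ∧
       (∀ j, (Finset.univ.filter fun i => A i j = true).card = k)}

/-- `A ∼ B` iff `A` is obtained from `B` by permuting rows and/or columns. -/
def rcEquiv {n : ℕ} (A B : Matrix (Fin n) (Fin n) Bool) : Prop :=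
  ∃ σ τ : Equiv.Perm (Fin n), ∀ i j, A i j = B (σ i) (τ j)

/-- `mu n k` : the number of equivalence classes of `Λ_n^k` under `∼`. -/
noncomputable def mu (n k : ℕ) : ℕ :=
  Nat.card (Quot fun A B : {M : Matrix (Fin n) (Fin n) Bool // M ∈ Lambda n k} =>
    rcEquiv A.1 B.1)

/-- The natural number whose `n`-digit binary representation is row `i` of `A`. -/
def rowVal {n : ℕ} (A : Matrix (Fin n) (Fin n) Bool) (i : Fin n) : ℕ :=
  ∑ j : Fin n, if A i j = true then 2 ^ (n - 1 - (j : ℕ)) else 0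

/-- A matrix is canonical when the row values of `A` and of `Aᵀ` are both
nondecreasing. -/
def IsCanonical {n : ℕ} (A : Matrix (Fin n) (Fin n) Bool) : Prop :=
  Monotone (rowVal A) ∧ Monotone (rowVal A.transpose)

/-!
Binary values compare rows lexicographically, so sorting the columns of a canonical matrix forces
its first row to be `0 ⋯ 0 1 ⋯ 1`, and by symmetry its first column as well. For `n = 4`, `k = 2`
the last two columns agree in the first row, so the second row is `0 b c 1` with `b + c = 1`, and
symmetrically for the second column; the row and column sums then determine the rest from `b`.
-/

section

open Finset

theorem strictMono_ofBits_ofColex (n : ℕ) :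
    StrictMono fun f : Colex (Fin n → Bool) ↦ Nat.ofBits (ofColex f) := by
  rintro f g ⟨i, heq, hlt⟩
  obtain ⟨hf, hg⟩ := Bool.lt_iff.mp hlt
  refine Nat.lt_of_testBit i ?_ ?_ fun j hij ↦ ?_
  · simpa using hf
  · simpa using hg
  · by_cases hj : j < n
    · simpa [hj] using heq ⟨j, hj⟩ hij
    · simp [Nat.testBit_ofBits_ge _ _ (not_lt.mp hj)]

theorem ofBits_eq_sum_two_pow {n : ℕ} (f : Fin n → Bool) :
    Nat.ofBits f = ∑ j, if f j = true then 2 ^ (j : ℕ) else 0 := by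
  induction n with
  | zero => rfl
  | succ n ih =>
    rw [Nat.ofBits_succ, ih, Fin.sum_univ_succ, mul_sum, add_comm]
    congr 1
    · cases f 0 <;> rfl
    · simp only [Function.comp_apply, mul_ite, mul_zero, Fin.val_succ, pow_succ']

theorem card_filter_eq_true_eq_sum_toNat {ι : Type*} [Fintype ι] (f : ι → Bool) :
    #{j | f j = true} = ∑ j, (f j).toNat := by
  rw [card_filter]
  exact sum_congr rfl fun j _ ↦ by cases f j <;> rfl

theorem eq_true_iff_le_add_card_of_monotone {n : ℕ} {f : Fin n → Bool} (hf : Monotone f)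
    (j : Fin n) : f j = true ↔ n ≤ j + #{j | f j = true} := by
  refine ⟨fun hj ↦ ?_, fun hcard ↦ ?_⟩
  · have hsub : Ici j ⊆ ({j | f j = true} : Finset (Fin n)) := fun i hi ↦
      mem_filter_univ i |>.mpr (Bool.le_iff_imp.mp (hf (mem_Ici.mp hi)) hj)
    have := card_le_card hsub
    rw [Fin.card_Ici] at this
    lia
  · by_contra hj
    have hsub : ({j | f j = true} : Finset (Fin n)) ⊆ Ioi j := fun i hi ↦
      mem_Ioi.mpr (not_le.mp fun hij ↦
        hj (Bool.le_iff_imp.mp (hf hij) (mem_filter_univ i |>.mp hi)))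
    have := card_le_card hsub
    rw [Fin.card_Ioi] at this
    lia

variable {n k : ℕ} {A : Matrix (Fin n) (Fin n) Bool}

theorem transpose_mem_Lambda (hA : A ∈ Lambda n k) : A.transpose ∈ Lambda n k :=
  ⟨hA.2, hA.1⟩

theorem sum_row_toNat_of_mem_Lambda (hA : A ∈ Lambda n k) (i : Fin n) :
    ∑ j, (A i j).toNat = k :=
  (card_filter_eq_true_eq_sum_toNat (A i)).symm.trans (hA.1 i)

theorem rowVal_eq_ofBits (A : Matrix (Fin n) (Fin n) Bool) (i : Fin n) :
    rowVal A i = Nat.ofBits fun j ↦ A i j.rev := by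
  rw [ofBits_eq_sum_two_pow, rowVal, ← Equiv.sum_comp Fin.revPerm]
  refine sum_congr rfl fun j _ ↦ ?_
  have hexp : n - 1 - (j.rev : ℕ) = j := by rw [Fin.val_rev]; lia
  rw [Fin.revPerm_apply, hexp]

theorem rowVal_injective :
    Function.Injective (rowVal : Matrix (Fin n) (Fin n) Bool → Fin n → ℕ) := by
  intro A B h
  ext i j
  have hbits : Nat.ofBits (fun j ↦ A i j.rev) = Nat.ofBits fun j ↦ B i j.rev := by
    simpa only [rowVal_eq_ofBits] using congrFun h i
  have := congrFun ((strictMono_ofBits_ofColex n).injective hbits) j.rev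
  rwa [Fin.rev_rev] at this

theorem apply_le_apply_of_rowVal_le {i i' j : Fin n} (hle : rowVal A i ≤ rowVal A i')
    (heq : ∀ l < j, A i l = A i' l) : A i j ≤ A i' j := by
  rw [rowVal_eq_ofBits, rowVal_eq_ofBits] at hle
  have hcolex := (strictMono_ofBits_ofColex n).le_iff_le.mp hle
  have := Pi.apply_le_of_toColex (i := j.rev) hcolex fun l hl ↦ heq l.rev (Fin.rev_lt_iff.mpr hl)
  rwa [Fin.rev_rev] at this

namespace IsCanonical

theorem transpose (hA : IsCanonical A) : IsCanonical A.transpose :=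
  ⟨hA.2, hA.1⟩

theorem apply_le_apply (hA : IsCanonical A) {i i' j : Fin n} (hi : i ≤ i')
    (heq : ∀ l < j, A i l = A i' l) : A i j ≤ A i' j :=
  apply_le_apply_of_rowVal_le (hA.1 hi) heq

theorem apply_zero_eq_true_iff {A : Matrix (Fin (n + 1)) (Fin (n + 1)) Bool} (hA : IsCanonical A)
    (hmem : A ∈ Lambda (n + 1) k) (j : Fin (n + 1)) : A 0 j = true ↔ n + 1 ≤ j + k := by
  have hmono : Monotone (A 0) := fun _ _ hj ↦
    hA.transpose.apply_le_apply hj fun l hl ↦ absurd hl l.not_lt_zero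
  rw [eq_true_iff_le_add_card_of_monotone hmono, hmem.1 0]

end IsCanonical

end

/-- The canonical matrices of `Λ_4^2`, parametrised by the entry in the second row and column. -/
def canonicalMatrix (b : Bool) : Matrix (Fin 4) (Fin 4) Bool :=
  !![false, false, true, true;
     false, b, !b, true;
     true, !b, b, false;
     true, true, false, false]

theorem canonicalMatrix_injective : Function.Injective canonicalMatrix :=
  fun _ _ h ↦ congrFun (congrFun h 1) 1

theorem rowVal_canonicalMatrix_false : rowVal (canonicalMatrix false) = ![3, 3, 12, 12] := by
  decide

theorem rowVal_canonicalMatrix_true : rowVal (canonicalMatrix true) = ![3, 5, 10, 12] := by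
  decide

theorem canonicalMatrix_mem_Lambda (b : Bool) : canonicalMatrix b ∈ Lambda 4 2 := by
  constructor <;> decide +revert

theorem transpose_canonicalMatrix (b : Bool) :
    (canonicalMatrix b).transpose = canonicalMatrix b := by
  decide +revert

theorem isCanonical_canonicalMatrix (b : Bool) : IsCanonical (canonicalMatrix b) := by
  have hmono : Monotone (rowVal (canonicalMatrix b)) := by
    rw [Fin.monotone_iff_le_succ]
    decide +revert
  exact ⟨hmono, (transpose_canonicalMatrix b).symm ▸ hmono⟩

namespace IsCanonical

variable {A : Matrix (Fin 4) (Fin 4) Bool}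

theorem row_zero_eq (hA : IsCanonical A) (hmem : A ∈ Lambda 4 2) :
    A 0 = ![false, false, true, true] := by
  ext j
  rw [Bool.eq_iff_iff, hA.apply_zero_eq_true_iff hmem j]
  fin_cases j <;> decide

theorem row_one_eq (hA : IsCanonical A) (hmem : A ∈ Lambda 4 2) :
    A 1 = ![false, A 1 1, !A 1 1, true] := by
  have hrow := hA.row_zero_eq hmem
  have hfirst : A 1 0 = false :=
    congrFun (hA.transpose.row_zero_eq (transpose_mem_Lambda hmem)) 1
  have hlast : A 1 2 ≤ A 1 3 :=
    hA.transpose.apply_le_apply (i := 2) (i' := 3) (j := 1) (by decide) fun l hl ↦ by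
      obtain rfl : l = 0 := by lia
      exact (congrFun hrow 2).trans (congrFun hrow 3).symm
  have hsum := sum_row_toNat_of_mem_Lambda hmem 1
  rw [Fin.sum_univ_four, hfirst] at hsum
  have hentries : A 1 2 = !A 1 1 ∧ A 1 3 = true := by
    revert hlast hsum
    cases A 1 1 <;> cases A 1 2 <;> cases A 1 3 <;> decide
  ext j
  fin_cases j <;> simp [hfirst, hentries]

theorem row_three_eq (hA : IsCanonical A) (hmem : A ∈ Lambda 4 2) :
    A 3 = ![true, true, false, false] := by
  have hmem' := transpose_mem_Lambda hmem
  have hfirst : A 3 0 = true := congrFun (hA.transpose.row_zero_eq hmem') 3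
  have hsecond : A 3 1 = true := congrFun (hA.transpose.row_one_eq hmem') 3
  have hsum := sum_row_toNat_of_mem_Lambda hmem 3
  rw [Fin.sum_univ_four, hfirst, hsecond] at hsum
  have hrest : A 3 2 = false ∧ A 3 3 = false := by
    revert hsum
    cases A 3 2 <;> cases A 3 3 <;> decide
  ext j
  fin_cases j <;> simp [hfirst, hsecond, hrest]

theorem row_two_eq (hA : IsCanonical A) (hmem : A ∈ Lambda 4 2) :
    A 2 = ![true, !A 1 1, A 1 1, false] := by
  have hmem' := transpose_mem_Lambda hmem
  have hfirst : A 2 0 = true := congrFun (hA.transpose.row_zero_eq hmem') 2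
  have hsecond : A 2 1 = !A 1 1 := congrFun (hA.transpose.row_one_eq hmem') 2
  have hlast : A 2 3 = false := congrFun (hA.transpose.row_three_eq hmem') 2
  have hsum := sum_row_toNat_of_mem_Lambda hmem 2
  rw [Fin.sum_univ_four, hfirst, hsecond, hlast] at hsum
  have hthird : A 2 2 = A 1 1 := by
    revert hsum
    cases A 1 1 <;> cases A 2 2 <;> decide
  ext j
  fin_cases j <;> simp [hfirst, hsecond, hthird, hlast]

theorem eq_canonicalMatrix (hA : IsCanonical A) (hmem : A ∈ Lambda 4 2) :
    A = canonicalMatrix (A 1 1) := by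
  funext i
  fin_cases i
  exacts [hA.row_zero_eq hmem, hA.row_one_eq hmem, hA.row_two_eq hmem, hA.row_three_eq hmem]

end IsCanonical

theorem mem_Lambda_and_isCanonical_iff {A : Matrix (Fin 4) (Fin 4) Bool} :
    A ∈ Lambda 4 2 ∧ IsCanonical A ↔ A ∈ Set.range canonicalMatrix := by
  constructor
  · rintro ⟨hmem, hA⟩
    exact ⟨A 1 1, (hA.eq_canonicalMatrix hmem).symm⟩
  · rintro ⟨b, rfl⟩
    exact ⟨canonicalMatrix_mem_Lambda b, isCanonical_canonicalMatrix b⟩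

theorem canonical_Lambda_four_two :
    (∀ A : Matrix (Fin 4) (Fin 4) Bool,
      (A ∈ Lambda 4 2 ∧ IsCanonical A) ↔
        (rowVal A = ![3, 3, 12, 12] ∨ rowVal A = ![3, 5, 10, 12])) ∧
    Nat.card {A : Matrix (Fin 4) (Fin 4) Bool |
        A ∈ Lambda 4 2 ∧ IsCanonical A} = 2 := by
  simp_rw [mem_Lambda_and_isCanonical_iff]
  refine ⟨fun A ↦ ?_, ?_⟩
  · simp only [← rowVal_canonicalMatrix_false, ← rowVal_canonicalMatrix_true,
      rowVal_injective.eq_iff, Set.mem_range, Bool.exists_bool, eq_comm (a := A)]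
  · exact (Nat.card_range_of_injective canonicalMatrix_injective).trans (by simp)
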